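/- Any two vertex preorders of C(m,n) are connected by a sequence of edges: for vertices v, w there is a sequence v = v₀, v₁, …, v_k = w of vertex preorders such that consecutive vertices v_i, v_{i+1} are both refined by a common edge preorder. -/

import Mathlib

/-- `Coll m n` is the set of collisions: vertical collisions `mᵢ` for `1 ≤ i < m`
(encoded `Sum.inl`) and horizontal collisions `lⱼ` for `1 ≤ j < n` (encoded `Sum.inr`). -/
abbrev Coll (m n : ℕ) := Fin (m - 1) ⊕ Fin (n - 1)

/-- A vertical and a horizontal collision are orthogonal. -/
def Orthogonal {m n : ℕ} : Coll m n → Coll m n → Prop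
  | Sum.inl _, Sum.inr _ => True
  | Sum.inr _, Sum.inl _ => True
  | _, _ => False

/-- Two distinct collisions of the same kind are parallel. -/
def Parallel {m n : ℕ} : Coll m n → Coll m n → Prop
  | Sum.inl i, Sum.inl j => i ≠ j
  | Sum.inr i, Sum.inr j => i ≠ j
  | _, _ => False

/-- `Between x y g`: `g` is a collision parallel to `x` and `y` whose index lies in the
interval spanned by the indices of `x` and `y`. -/
def Between {m n : ℕ} : Coll m n → Coll m n → Coll m n → Prop
  | Sum.inl i, Sum.inl j, Sum.inl s => min i j ≤ s ∧ s ≤ max i j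
  | Sum.inr i, Sum.inr j, Sum.inr s => min i j ≤ s ∧ s ≤ max i j
  | _, _, _ => False

/-- Strict comparison in a preorder `R`. -/
def StrictR {m n : ℕ} (R : Coll m n → Coll m n → Prop) (x y : Coll m n) : Prop :=
  R x y ∧ ¬ R y x

/-- `z` is an orthogonal link between the parallel collisions `x` and `y`:
`z` is orthogonal to them and `x ≤ z ≤ y` or `y ≤ z ≤ x`. -/
def IsLink {m n : ℕ} (R : Coll m n → Coll m n → Prop) (x y z : Coll m n) : Prop :=
  Orthogonal x z ∧ ((R x z ∧ R z y) ∨ (R y z ∧ R z x))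

/-- `g` is a gap between the parallel collisions `x` and `y`: its index is between theirs
and `x < g > y` strictly. -/
def IsGap {m n : ℕ} (R : Coll m n → Coll m n → Prop) (x y g : Coll m n) : Prop :=
  Between x y g ∧ StrictR R x g ∧ StrictR R y g

/-- A good rectangular preorder on `Coll m n`: a reflexive transitive relation such that
orthogonal collisions are always comparable, and parallel collisions are comparable iff
there is an orthogonal link between them or there is no gap between them. -/
structure IsGoodRect {m n : ℕ} (R : Coll m n → Coll m n → Prop) : Prop where
  refl : ∀ x, R x x
  trans : ∀ x y z, R x y → R y z → R x z
  orth : ∀ x y, Orthogonal x y → R x y ∨ R y x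
  par : ∀ x y, Parallel x y →
    ((R x y ∨ R y x) ↔ ((∃ z, IsLink R x y z) ∨ ¬ ∃ g, IsGap R x y g))

/-- `P` refines `Q`: every comparison of `P` holds in `Q`. -/
def Refines {m n : ℕ} (P Q : Coll m n → Coll m n → Prop) : Prop :=
  ∀ x y, P x y → Q x y

/-- A vertex preorder: a good rectangular preorder in which equivalence implies equality. -/
def IsVertexP {m n : ℕ} (R : Coll m n → Coll m n → Prop) : Prop :=
  IsGoodRect R ∧ ∀ x y, R x y → R y x → x = y

/-- An edge preorder: a good rectangular preorder with exactly one equivalence class of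
size two (the pair `{a,b}`), all other classes being singletons. -/
def IsEdgeP {m n : ℕ} (R : Coll m n → Coll m n → Prop) : Prop :=
  IsGoodRect R ∧ ∃ a b : Coll m n, a ≠ b ∧ R a b ∧ R b a ∧
    ∀ x y : Coll m n, x ≠ y → R x y → R y x → (x = a ∧ y = b) ∨ (x = b ∧ y = a)

/-- Two vertex preorders are adjacent if some edge preorder is refined by both. -/
def AdjV {m n : ℕ} (v w : Coll m n → Coll m n → Prop) : Prop :=
  IsVertexP v ∧ IsVertexP w ∧
    ∃ E : Coll m n → Coll m n → Prop, IsEdgeP E ∧ Refines v E ∧ Refines w E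

section Aux
variable {m n : ℕ}

lemma btw_split (x y z g : Coll m n) (h : ¬ Orthogonal x y) (hb : Between x z g) :
    Between x y g ∨ Between y z g := by
  rcases x with x | x <;> rcases y with y | y <;> rcases z with z | z <;> rcases g with g | g <;>
    simp [Between, Orthogonal] at * <;> grind

lemma btw_sub (x y g k : Coll m n) (h : Between x y g) (hb : Between x g k) :
    Between x y k := by
  rcases x with x | x <;> rcases y with y | y <;> rcases k with z | z <;> rcases g with g | g <;>
    simp [Between] at * <;> grind

lemma btw_symm (x y g : Coll m n) (h : Between x y g) : Between y x g := by
  rcases x with x | x <;> rcases y with y | y <;> rcases g with g | g <;>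
    simp [Between] at * <;> grind

lemma btw_self (x g : Coll m n) (h : Between x x g) : g = x := by
  rcases x with x | x <;> rcases g with g | g <;>
    simp [Between] at * <;> grind

lemma btw_left (x y : Coll m n) (h : Parallel x y) : Between x y x := by
  rcases x with x | x <;> rcases y with y | y <;>
    simp [Between, Parallel] at *

lemma btw_not_orth (x y g : Coll m n) (h : Between x y g) :
    ¬ Orthogonal x y ∧ ¬ Orthogonal x g := by
  rcases x with x | x <;> rcases y with y | y <;> rcases g with g | g <;>
    simp [Between, Orthogonal] at *

lemma par_or (x y : Coll m n) : x = y ∨ Orthogonal x y ∨ Parallel x y := by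
  rcases x with x | x <;> rcases y with y | y <;>
    simp [Parallel, Orthogonal] <;> grind

lemma par_symm (x y : Coll m n) (h : Parallel x y) : Parallel y x := by
  rcases x with x | x <;> rcases y with y | y <;>
    simp [Parallel] at * <;> grind

lemma par_not_orth (x y : Coll m n) (h : Parallel x y) : ¬ Orthogonal x y := by
  rcases x with x | x <;> rcases y with y | y <;>
    simp [Parallel, Orthogonal] at *

lemma orth_symm (x y : Coll m n) (h : Orthogonal x y) : Orthogonal y x := by
  rcases x with x | x <;> rcases y with y | y <;>
    simp [Orthogonal] at *

lemma orth_par (x y z : Coll m n) (h : ¬ Orthogonal x y) (h' : Orthogonal y z) :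
    Orthogonal x z := by
  rcases x with x | x <;> rcases y with y | y <;> rcases z with z | z <;>
    simp [Orthogonal] at *

lemma orth_orth (x y z : Coll m n) (h : Orthogonal x y) (h' : ¬ Orthogonal y z) :
    Orthogonal x z := by
  rcases x with x | x <;> rcases y with y | y <;> rcases z with z | z <;>
    simp [Orthogonal] at *

/-- The preorder associated with a ranking of the collisions. -/
def RF (f : Coll m n → ℕ) (x y : Coll m n) : Prop :=
  f x ≤ f y ∧ ((∃ z, Orthogonal x z ∧ f x ≤ f z ∧ f z ≤ f y) ∨
    ∀ g, Between x y g → f g ≤ f y)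

lemma RF_orth (f : Coll m n → ℕ) (x y : Coll m n) (h : Orthogonal x y) (hf : f x ≤ f y) :
    RF f x y :=
  ⟨hf, Or.inr fun g hg => absurd h (btw_not_orth x y g hg).1⟩

lemma RF_symm (f : Coll m n → ℕ) (x y : Coll m n) (h : RF f x y) (hf : f x = f y) :
    RF f y x := by
  obtain ⟨h1, h2⟩ := h
  by_cases ho : Orthogonal x y
  · exact RF_orth f y x (orth_symm _ _ ho) hf.ge
  refine ⟨hf.ge, ?_⟩
  rcases h2 with ⟨z, hz, ha, hb⟩ | h2
  · refine Or.inl ⟨z, orth_par _ _ _ (fun h => ho (orth_symm _ _ h)) hz, by omega, by omega⟩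
  · refine Or.inr fun g hg => ?_
    have := h2 g (btw_symm _ _ _ hg)
    omega

/-- A highest element between two collisions. -/
lemma exists_top (f : Coll m n → ℕ) (x y g : Coll m n) (h : Between x y g) :
    ∃ t, Between x y t ∧ f g ≤ f t ∧ ∀ k, Between x y k → f k ≤ f t := by
  classical
  obtain ⟨t, ht, hm⟩ := Finset.exists_max_image
    (Finset.univ.filter fun k => Between x y k) f ⟨g, by simpa using h⟩
  simp only [Finset.mem_filter, Finset.mem_univ, true_and] at ht hm
  exact ⟨t, ht, hm g h, hm⟩

lemma RF_gap (f : Coll m n → ℕ) (x y g : Coll m n) (h : Between x y g)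
    (h1 : f x < f g) (h2 : f y < f g) : ∃ g, IsGap (RF f) x y g := by
  obtain ⟨t, ht, hgt, hm⟩ := exists_top f x y g h
  refine ⟨t, ht, ⟨⟨by omega, Or.inr fun k hk => hm k (btw_sub _ _ _ _ ht hk)⟩, fun h => ?_⟩,
    ⟨⟨by omega, Or.inr fun k hk => hm k
      (btw_symm _ _ _ (btw_sub _ _ _ _ (btw_symm _ _ _ ht) hk))⟩, fun h => ?_⟩⟩
  · have := h.1; omega
  · have := h.1; omega

lemma RF_par_aux (f : Coll m n → ℕ) (x y : Coll m n) (hp : Parallel x y) (hf : f x ≤ f y) :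
    RF f x y ↔ ((∃ z, IsLink (RF f) x y z) ∨ ¬ ∃ g, IsGap (RF f) x y g) := by
  have ho := par_not_orth _ _ (par_symm _ _ hp)
  constructor
  · rintro ⟨_, ⟨z, hz, ha, hb⟩ | h⟩
    · exact Or.inl ⟨z, hz, Or.inl ⟨RF_orth _ _ _ hz ha,
        RF_orth _ _ _ (orth_symm _ _ (orth_par _ _ _ ho hz)) hb⟩⟩
    · right
      rintro ⟨g, hb, h1, h2⟩
      have := h g hb
      have h3 := h2.1.1
      exact h2.2 (RF_symm _ _ _ h2.1 (by omega))
  · rintro (⟨z, hz, ⟨h1, h2⟩ | ⟨h1, h2⟩⟩ | h)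
    · exact ⟨hf, Or.inl ⟨z, hz, h1.1, h2.1⟩⟩
    · have := h1.1
      have := h2.1
      exact ⟨hf, Or.inl ⟨z, hz, by omega, by omega⟩⟩
    · refine ⟨hf, Or.inr fun g hg => ?_⟩
      by_contra hc
      exact h (RF_gap f x y g hg (by omega) (by omega))

lemma link_symm (R : Coll m n → Coll m n → Prop) (x y z : Coll m n) (hp : Parallel x y)
    (h : IsLink R x y z) : IsLink R y x z :=
  ⟨orth_par _ _ _ (par_not_orth _ _ (par_symm _ _ hp)) h.1, h.2.symm⟩

lemma gap_symm (R : Coll m n → Coll m n → Prop) (x y z : Coll m n)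
    (h : IsGap R x y z) : IsGap R y x z :=
  ⟨btw_symm _ _ _ h.1, h.2.2, h.2.1⟩

lemma RF_good (f : Coll m n → ℕ) : IsGoodRect (RF f) where
  refl x := ⟨le_rfl, Or.inr fun g hg => by rw [btw_self _ _ hg]⟩
  trans x y z hxy hyz := by
    have h1 := hxy.1
    have h2 := hyz.1
    refine ⟨h1.trans h2, ?_⟩
    by_cases ho : Orthogonal x y
    · by_cases ho' : Orthogonal y z
      · exact Or.inl ⟨y, ho, h1, h2⟩
      · exact Or.inr fun g hg => absurd (orth_orth _ _ _ ho ho') (btw_not_orth _ _ _ hg).1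
    · rcases hxy.2 with ⟨w, hw, ha, hb⟩ | h3
      · exact Or.inl ⟨w, hw, ha, by omega⟩
      rcases hyz.2 with ⟨w, hw, ha, hb⟩ | h4
      · exact Or.inl ⟨w, orth_par _ _ _ ho hw, by omega, hb⟩
      refine Or.inr fun g hg => ?_
      rcases btw_split x y z g ho hg with h | h
      · exact (h3 g h).trans h2
      · exact h4 g h
  orth x y h := by
    rcases le_total (f x) (f y) with hf | hf
    · exact Or.inl (RF_orth _ _ _ h hf)
    · exact Or.inr (RF_orth _ _ _ (orth_symm _ _ h) hf)
  par x y hp := by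
    rcases le_total (f x) (f y) with hf | hf
    · rw [← RF_par_aux f x y hp hf]
      exact ⟨fun h => h.elim id fun h => RF_symm _ _ _ h (le_antisymm h.1 hf), Or.inl⟩
    · have e1 : (∃ z, IsLink (RF f) x y z) ↔ ∃ z, IsLink (RF f) y x z :=
        exists_congr fun z => ⟨link_symm _ _ _ _ hp, link_symm _ _ _ _ (par_symm _ _ hp)⟩
      have e2 : (∃ z, IsGap (RF f) x y z) ↔ ∃ z, IsGap (RF f) y x z :=
        exists_congr fun z => ⟨gap_symm _ _ _ _, gap_symm _ _ _ _⟩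
      rw [e1, e2, ← RF_par_aux f y x (par_symm _ _ hp) hf]
      exact ⟨fun h => h.elim (fun h => RF_symm _ _ _ h (le_antisymm h.1 hf)) id, Or.inr⟩

lemma RF_vertex (f : Coll m n → ℕ) (hf : Function.Injective f) : IsVertexP (RF f) :=
  ⟨RF_good f, fun _ _ h1 h2 => hf (le_antisymm h1.1 h2.1)⟩

lemma RF_mono (f g : Coll m n → ℕ) (h : ∀ x y, f x ≤ f y → g x ≤ g y) :
    Refines (RF f) (RF g) := by
  rintro x y ⟨h1, ⟨z, hz, ha, hb⟩ | h2⟩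
  · exact ⟨h _ _ h1, Or.inl ⟨z, hz, h _ _ ha, h _ _ hb⟩⟩
  · exact ⟨h _ _ h1, Or.inr fun k hk => h _ _ (h2 k hk)⟩

/-- A good preorder refining a vertex preorder equals it. -/
lemma eq_of_refines (P Q : Coll m n → Coll m n → Prop) (hP : IsGoodRect P) (hQ : IsVertexP Q)
    (h : Refines P Q) : P = Q := by
  have key : ∀ x y, Q x y → P x y ∨ P y x → P x y := by
    rintro x y hq (hp | hp)
    · exact hp
    · rw [hQ.2 x y hq (h _ _ hp)]; exact hP.refl y
  have ho : ∀ x y, Orthogonal x y → Q x y → P x y := fun x y ho hq =>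
    key x y hq (hP.orth x y ho)
  have hs : ∀ x y, StrictR P x y → StrictR Q x y := by
    rintro x y ⟨h1, h2⟩
    refine ⟨h _ _ h1, fun h3 => h2 ?_⟩
    rw [hQ.2 x y (h _ _ h1) h3]; exact hP.refl y
  funext x y
  refine propext ⟨h x y, fun hq => ?_⟩
  rcases par_or x y with rfl | hor | hp
  · exact hP.refl x
  · exact ho x y hor hq
  · refine key x y hq ((hP.par x y hp).2 ?_)
    have hyx := par_not_orth _ _ (par_symm _ _ hp)
    rcases (hQ.1.par x y hp).1 (Or.inl hq) with ⟨z, hz, hz'⟩ | hg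
    · have hyz := orth_par _ _ _ hyx hz
      refine Or.inl ⟨z, hz, ?_⟩
      rcases hz' with ⟨h1, h2⟩ | ⟨h1, h2⟩
      · exact Or.inl ⟨ho _ _ hz h1, ho _ _ (orth_symm _ _ hyz) h2⟩
      · exact Or.inr ⟨ho _ _ hyz h1, ho _ _ (orth_symm _ _ hz) h2⟩
    · refine Or.inr fun ⟨g, hb, h1, h2⟩ => hg ⟨g, hb, hs _ _ h1, hs _ _ h2⟩

/-- A vertex preorder is recovered from any of its linear extensions. -/
lemma vertex_eq_RF (v : Coll m n → Coll m n → Prop) (hv : IsVertexP v) (f : Coll m n → ℕ)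
    (hf : Function.Injective f) (hm : ∀ x y, v x y → f x ≤ f y) : v = RF f := by
  refine eq_of_refines v (RF f) hv.1 (RF_vertex f hf) fun x y hxy => ?_
  rcases par_or x y with rfl | ho | hp
  · exact (RF_good f).refl x
  · exact RF_orth _ _ _ ho (hm _ _ hxy)
  refine ⟨hm _ _ hxy, ?_⟩
  rcases (hv.1.par x y hp).1 (Or.inl hxy) with ⟨z, hz, ⟨h1, h2⟩ | ⟨h1, h2⟩⟩ | hg
  · exact Or.inl ⟨z, hz, hm _ _ h1, hm _ _ h2⟩
  · have a1 := hm _ _ h1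
    have a2 := hm _ _ h2
    have a3 := hm _ _ hxy
    exact Or.inl ⟨z, hz, by omega, by omega⟩
  · refine Or.inr fun g hbg => ?_
    by_contra hc
    have hxy' := hm _ _ hxy
    obtain ⟨t, ht, hgt, htop⟩ := exists_top f x y g hbg
    have main : ∀ u, f u < f t → ¬ Orthogonal u t →
        (∀ k, Between u t k → f k ≤ f t) → StrictR v u t := by
      intro u hu hno hk
      have hcomp : v u t ∨ v t u := by
        rcases par_or u t with rfl | h | h
        · omega
        · exact absurd h hno
        · refine (hv.1.par u t h).2 (Or.inr ?_)
          rintro ⟨k, hbk, _, h2⟩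
          have b1 := hk k hbk
          have b2 := hm _ _ h2.1
          have : k = t := hf (by omega)
          subst this
          exact h2.2 h2.1
      have hn : ¬ v t u := fun h => by have := hm _ _ h; omega
      exact ⟨hcomp.resolve_right hn, hn⟩
    refine hg ⟨t, ht, main x (by omega) (btw_not_orth _ _ _ ht).2
      fun k hk => htop k (btw_sub _ _ _ _ ht hk),
      main y (by omega) (btw_not_orth _ _ _ (btw_symm _ _ _ ht)).2
      fun k hk => htop k (btw_symm _ _ _ (btw_sub _ _ _ _ (btw_symm _ _ _ ht) hk))⟩

/-- The key step: two rankings with a common coarsening that merges a single pair. -/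
lemma adj_step (f f' h : Coll m n → ℕ) (hf : Function.Injective f) (hf' : Function.Injective f')
    (hfh : ∀ x y, f x ≤ f y → h x ≤ h y) (hfh' : ∀ x y, f' x ≤ f' y → h x ≤ h y)
    (a b : Coll m n)
    (hab : ∀ x y, x ≠ y → h x = h y → (x = a ∧ y = b) ∨ (x = b ∧ y = a)) :
    Relation.ReflTransGen AdjV (RF f) (RF f') := by
  by_cases hv : IsVertexP (RF h)
  · rw [eq_of_refines _ _ (RF_good f) hv (RF_mono f h hfh),
      eq_of_refines _ _ (RF_good f') hv (RF_mono f' h hfh')]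
  · have hE : IsEdgeP (RF h) := by
      refine ⟨RF_good h, ?_⟩
      have : ¬ ∀ x y, RF h x y → RF h y x → x = y := fun hc => hv ⟨RF_good h, hc⟩
      push Not at this
      obtain ⟨x, y, h1, h2, hne⟩ := this
      have hxy := hab x y hne (le_antisymm h1.1 h2.1)
      refine ⟨x, y, hne, h1, h2, fun p q hpq h3 h4 => ?_⟩
      have := hab p q hpq (le_antisymm h3.1 h4.1)
      grind
    exact Relation.ReflTransGen.single
      ⟨RF_vertex f hf, RF_vertex f' hf', RF h, hE, RF_mono f h hfh, RF_mono f' h hfh'⟩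

lemma swap_step {k : ℕ} (e : Coll m n ≃ Fin (k + 1)) (i : Fin k) :
    Relation.ReflTransGen AdjV (RF fun x => (e x : ℕ))
      (RF fun x => (Equiv.swap i.castSucc i.succ (e x) : ℕ)) := by
  have inj : Function.Injective fun x => (e x : ℕ) := fun x y h => e.injective (Fin.ext h)
  have sv : ∀ t : Fin (k + 1), ((Equiv.swap i.castSucc i.succ t : Fin (k + 1)) : ℕ) =
      if (t : ℕ) = i then (i : ℕ) + 1 else if (t : ℕ) = i + 1 then (i : ℕ) else t := by
    intro t
    rw [Equiv.swap_apply_def]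
    simp only [Fin.ext_iff, Fin.val_castSucc, Fin.val_succ]
    split_ifs <;> simp
  refine adj_step _ _ (fun x => if (e x : ℕ) ≤ i then (e x : ℕ) else (e x : ℕ) - 1) inj
    (fun x y h => e.injective ((Equiv.swap _ _).injective (Fin.ext h))) ?_ ?_
    (e.symm i.castSucc) (e.symm i.succ) ?_
  · intro x y h
    split_ifs <;> omega
  · intro x y h
    simp only [sv] at h
    split_ifs at * <;> omega
  · intro x y hne h
    have hne' : (e x : ℕ) ≠ e y := fun h => hne (inj h)
    simp only [Equiv.eq_symm_apply, Fin.ext_iff, Fin.val_castSucc, Fin.val_succ]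
    split_ifs at h <;> omega

lemma perm_conn {k : ℕ} (π : Equiv.Perm (Fin (k + 1))) :
    ∀ e : Coll m n ≃ Fin (k + 1), Relation.ReflTransGen AdjV (RF fun x => (e x : ℕ))
      (RF fun x => (π (e x) : ℕ)) := by
  have hπ : π ∈ Submonoid.closure
      (Set.range fun i : Fin k => Equiv.swap i.castSucc i.succ) := by
    rw [Equiv.Perm.mclosure_swap_castSucc_succ]; trivial
  induction hπ using Submonoid.closure_induction with
  | mem σ hσ =>
    obtain ⟨i, rfl⟩ := hσ
    exact fun e => swap_step e i
  | one => exact fun e => Relation.ReflTransGen.refl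
  | mul σ τ _ _ h1 h2 => exact fun e => (h2 e).trans (h1 (e.trans τ))

lemma exists_lin {α : Type*} [Fintype α] (v : α → α → Prop) [IsPartialOrder α v] {k : ℕ}
    (hk : Fintype.card α = k) :
    ∃ e : α ≃ Fin k, ∀ x y, v x y → e x ≤ e y := by
  classical
  obtain ⟨s, hs, hvs⟩ := extend_partialOrder v
  let L : LinearOrder α :=
    { le := s
      le_refl := hs.refl
      le_trans := hs.trans
      le_antisymm := hs.antisymm
      le_total := hs.total
      toDecidableLE := Classical.decRel _ }
  let o := Fintype.orderIsoFinOfCardEq α hk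
  exact ⟨o.toEquiv.symm, fun x y h => o.symm.monotone (hvs _ _ h)⟩

lemma exists_rank (v : Coll m n → Coll m n → Prop) (hv : IsVertexP v) {k : ℕ}
    (hk : Fintype.card (Coll m n) = k) :
    ∃ e : Coll m n ≃ Fin k, v = RF fun x => (e x : ℕ) := by
  have : IsPartialOrder (Coll m n) v :=
    { refl := hv.1.refl, trans := hv.1.trans, antisymm := hv.2 }
  obtain ⟨e, he⟩ := exists_lin v hk
  exact ⟨e, vertex_eq_RF v hv _ (fun x y h => e.injective (Fin.ext h)) he⟩

end Aux

/-- Any two vertex preorders of `C(m,n)` are connected by a sequence of edges. -/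
theorem vertices_edge_connected {m n : ℕ}
    (v w : Coll m n → Coll m n → Prop)
    (hv : IsVertexP v) (hw : IsVertexP w) :
    Relation.ReflTransGen AdjV v w := by
  rcases hc : Fintype.card (Coll m n) with _ | k
  · have : IsEmpty (Coll m n) := Fintype.card_eq_zero_iff.1 hc
    have : v = w := funext fun x => isEmptyElim x
    rw [this]
  · obtain ⟨e, he⟩ := exists_rank v hv hc
    obtain ⟨e', he'⟩ := exists_rank w hw hc
    have := perm_conn (e.symm.trans e') e
    simp only [Equiv.trans_apply, Equiv.symm_apply_apply] at this
    rw [he, he']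
    exact this
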